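/- Two-dimensional horizontal surgery estimate: Let ω be a locally finite positive Borel measure on ℝ², let J and R be squares with ρ-comparable side lengths such that J ⊂ 3R, and let λ ∈ (0,1/2). Let ℋ_λ be the set of horizontal translations γ of step λℓ(J) with |γ| ≤ Cℓ(R). Then (1/#ℋ_λ) Σ_{γ ∈ ℋ_λ} ∫_{(J+γ)_λ^{left}} |Δ_{J+γ}^ω 1_R|² dω ≤ C_ρ √λ ω(R), where (J+γ)_λ^{left} is the vertical face of width λℓ(J) of the lower-left corner (J+γ)_− ∖ (J+γ)_λ, and C_ρ depends only on ρ. -/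

import Mathlib

open MeasureTheory Set Filter Topology
open scoped ENNReal NNReal Classical

noncomputable section

/-- Euclidean space `ℝⁿ`. -/
abbrev Pt (n : ℕ) : Type := EuclideanSpace ℝ (Fin n)

/-- An axis-parallel half-open cube in `ℝⁿ`, given by its corner `c` and positive
side length `l`. -/
structure Cube (n : ℕ) : Type where
  c : Pt n
  l : ℝ
  lpos : 0 < l

namespace Cube

variable {n : ℕ}

/-- The underlying (half-open) set of the cube. -/
def set (Q : Cube n) : Set (Pt n) := {x | ∀ i, Q.c i ≤ x i ∧ x i < Q.c i + Q.l}

/-- The center of the cube. -/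
def center (Q : Cube n) : Pt n := WithLp.toLp 2 fun i => Q.c i + Q.l / 2

/-- The concentric triple `3Q`. -/
def tri (Q : Cube n) : Cube n := ⟨WithLp.toLp 2 fun i => Q.c i - Q.l, 3 * Q.l, by have := Q.lpos; linarith⟩

/-- The dyadic child of a cube indexed by `e : Fin n → Bool`. -/
def child (Q : Cube n) (e : Fin n → Bool) : Cube n :=
  ⟨WithLp.toLp 2 fun i => Q.c i + (if e i then Q.l / 2 else 0), Q.l / 2, by have := Q.lpos; linarith⟩

/-- The translate `Q + γ` of a cube. -/
def trans (Q : Cube n) (γ : Pt n) : Cube n := ⟨WithLp.toLp 2 fun i => Q.c i + γ i, Q.l, Q.lpos⟩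

/-- The `λ`-interior `Q_λ = {x ∈ Q : dist(x,∂Q) > λ ℓ(Q)}` of a cube. -/
def inn (Q : Cube n) (lam : ℝ) : Set (Pt n) :=
  {x ∈ Q.set | lam * Q.l < Metric.infDist x (frontier Q.set)}

end Cube

/-- The distance between two sets, as an extended nonnegative real. -/
def sDistE {n : ℕ} (s t : Set (Pt n)) : ℝ≥0∞ := ⨅ (x ∈ s) (y ∈ t), edist x y

/-- Side lengths comparable within a factor `Cc` : `1/Cc ≤ ℓ(Q)/ℓ(Q') ≤ Cc`. -/
def sideComp {n : ℕ} (Cc : ℝ) (Q Q' : Cube n) : Prop := Q.l ≤ Cc * Q'.l ∧ Q'.l ≤ Cc * Q.l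

/-- Two cubes touch if their closures intersect, and the intersection is contained in
the boundary of the larger cube. -/
def Touching {n : ℕ} (Q R : Cube n) : Prop :=
  (closure Q.set ∩ closure R.set).Nonempty ∧
  (Q.l ≤ R.l → closure Q.set ∩ closure R.set ⊆ frontier R.set) ∧
  (R.l ≤ Q.l → closure Q.set ∩ closure R.set ⊆ frontier Q.set)

/-- The indicator function of a set. -/
def indic {n : ℕ} (s : Set (Pt n)) : Pt n → ℝ := s.indicator 1

/-- A standard `α`-fractional Calderón–Zygmund kernel in `ℝⁿ`: size and smoothness of
order `1 + δ`, for the kernel and its adjoint. -/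
structure CZKernel (n : ℕ) (α : ℝ) : Type where
  K : Pt n → Pt n → ℝ
  C₀ : ℝ
  Cpos : 0 < C₀
  δ : ℝ
  δpos : 0 < δ
  size : ∀ x y : Pt n, x ≠ y → |K x y| ≤ C₀ * ‖x - y‖ ^ (α - n)
  gradSize : ∀ x y : Pt n, x ≠ y →
    ‖fderiv ℝ (fun z => K z y) x‖ ≤ C₀ * ‖x - y‖ ^ (α - n - 1)
  gradHolder : ∀ x x' y : Pt n, x ≠ y → ‖x - x'‖ ≤ ‖x - y‖ / 2 →
    ‖fderiv ℝ (fun z => K z y) x - fderiv ℝ (fun z => K z y) x'‖ ≤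
      C₀ * (‖x - x'‖ / ‖x - y‖) ^ δ * ‖x - y‖ ^ (α - n - 1)
  gradSizeAdj : ∀ x y : Pt n, x ≠ y →
    ‖fderiv ℝ (fun z => K x z) y‖ ≤ C₀ * ‖x - y‖ ^ (α - n - 1)
  gradHolderAdj : ∀ x y y' : Pt n, x ≠ y → ‖y - y'‖ ≤ ‖x - y‖ / 2 →
    ‖fderiv ℝ (fun z => K x z) y - fderiv ℝ (fun z => K x z) y'‖ ≤
      C₀ * (‖y - y'‖ / ‖x - y‖) ^ δ * ‖x - y‖ ^ (α - n - 1)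

/-- A (tangent line type) truncation of a CZ kernel: a bounded kernel, vanishing on the
diagonal, compactly supported, agreeing with `K` in the annulus `d ≤ |x-y| ≤ r`. -/
structure Truncation {n : ℕ} {α : ℝ} (K : CZKernel n α) : Type where
  Kt : Pt n → Pt n → ℝ
  d : ℝ
  r : ℝ
  dpos : 0 < d
  dlt : d < r
  bounded : ∃ M, ∀ x y, |Kt x y| ≤ M
  diag : ∀ x, Kt x x = 0
  agrees : ∀ x y : Pt n, d ≤ ‖x - y‖ → ‖x - y‖ ≤ r → Kt x y = K.K x y
  compactsupp : ∃ S, ∀ x y : Pt n, S ≤ ‖x - y‖ → Kt x y = 0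

/-- The truncated operator `T^α_μ f (x) = ∫ K_t(x,y) f(y) dμ(y)`. -/
def Truncation.op {n : ℕ} {α : ℝ} {K : CZKernel n α} (τ : Truncation K)
    (μ : Measure (Pt n)) (f : Pt n → ℝ) (x : Pt n) : ℝ := ∫ y, τ.Kt x y * f y ∂μ

/-- The truncated dual operator `(T^α)^*_μ g (x) = ∫ K_t(y,x) g(y) dμ(y)`. -/
def Truncation.opAdj {n : ℕ} {α : ℝ} {K : CZKernel n α} (τ : Truncation K)
    (μ : Measure (Pt n)) (g : Pt n → ℝ) (x : Pt n) : ℝ := ∫ y, τ.Kt y x * g y ∂μ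

/-- The two-weight norm constant `𝔑_{T^α}(σ,ω)`, uniform over all truncations. -/
def normConst {n : ℕ} {α : ℝ} (K : CZKernel n α) (σ ω : Measure (Pt n)) : ℝ≥0∞ :=
  sInf {N : ℝ≥0∞ | ∀ τ : Truncation K, ∀ f : Pt n → ℝ,
    ∫⁻ x, ENNReal.ofReal ((τ.op σ f x) ^ 2) ∂ω ≤ N ^ 2 * ∫⁻ x, ENNReal.ofReal ((f x) ^ 2) ∂σ}

/-- The (quasi)cube `Ω Q` associated to a cube `Q` and a globally biLipschitz map `Ω`;
for ordinary cubes take `Ω = id`. -/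
def qset {n : ℕ} (Om : Pt n → Pt n) (Q : Cube n) : Set (Pt n) := Om '' Q.set

/-- The (quasi)cube testing constant `𝔗_{T^α}(σ,ω)`, uniform over all truncations. -/
def testConst {n : ℕ} {α : ℝ} (Om : Pt n → Pt n) (K : CZKernel n α)
    (σ ω : Measure (Pt n)) : ℝ≥0∞ :=
  sInf {T : ℝ≥0∞ | ∀ τ : Truncation K, ∀ Q : Cube n,
    ∫⁻ x in qset Om Q, ENNReal.ofReal ((τ.op σ (indic (qset Om Q)) x) ^ 2) ∂ω ≤
      T ^ 2 * σ (qset Om Q)}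

/-- The dual (quasi)cube testing constant `𝔗^*_{T^α}(σ,ω)`. -/
def testConstDual {n : ℕ} {α : ℝ} (Om : Pt n → Pt n) (K : CZKernel n α)
    (σ ω : Measure (Pt n)) : ℝ≥0∞ :=
  sInf {T : ℝ≥0∞ | ∀ τ : Truncation K, ∀ Q : Cube n,
    ∫⁻ x in qset Om Q, ENNReal.ofReal ((τ.opAdj ω (indic (qset Om Q)) x) ^ 2) ∂σ ≤
      T ^ 2 * ω (qset Om Q)}

/-- The weak boundedness constant `𝒲ℬ𝒫_{T^α}(σ,ω)` with comparability constant `Cc`. -/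
def wbpConst {n : ℕ} {α : ℝ} (K : CZKernel n α) (Cc : ℝ) (σ ω : Measure (Pt n)) : ℝ≥0∞ :=
  sInf {W : ℝ≥0∞ | ∀ τ : Truncation K, ∀ Q Q' : Cube n, sideComp Cc Q Q' →
    (Q.set ⊆ Q'.tri.set \ Q'.set ∨ Q'.set ⊆ Q.tri.set \ Q.set) →
    ENNReal.ofReal |∫ x in Q.set, τ.op σ (indic Q'.set) x ∂ω| ≤
      W * (ω Q.set) ^ (1/2 : ℝ) * (σ Q'.set) ^ (1/2 : ℝ)}

/-- The indicator/touching constant `𝔍_{T^α}(σ,ω)` with comparability constant `Cc`. -/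
def indTouchConst {n : ℕ} {α : ℝ} (K : CZKernel n α) (Cc : ℝ) (σ ω : Measure (Pt n)) : ℝ≥0∞ :=
  sInf {Jc : ℝ≥0∞ | ∀ τ : Truncation K, ∀ Q Q' : Cube n, Touching Q Q' → sideComp Cc Q Q' →
    (Q.set ⊆ Q'.tri.set \ Q'.set ∨ Q'.set ⊆ Q.tri.set \ Q.set) →
    ENNReal.ofReal |∫ x in Q'.set, τ.op σ (indic Q.set) x ∂ω| ≤
      Jc * (σ Q.set) ^ (1/2 : ℝ) * (ω Q'.set) ^ (1/2 : ℝ)}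

/-- The reproducing Poisson integral `𝒫^α(ΩQ, μ)`. -/
def repPoisson {n : ℕ} (α : ℝ) (Om : Pt n → Pt n) (Q : Cube n) (μ : Measure (Pt n)) : ℝ≥0∞ :=
  ∫⁻ x, ENNReal.ofReal ((Q.l / (Q.l + ‖x - Om Q.center‖) ^ 2) ^ ((n : ℝ) - α)) ∂μ

/-- The standard Poisson integral `P^α(ΩQ, μ)`. -/
def stdPoisson {n : ℕ} (α : ℝ) (Om : Pt n → Pt n) (Q : Cube n) (μ : Measure (Pt n)) : ℝ≥0∞ :=
  ∫⁻ x, ENNReal.ofReal (Q.l / (Q.l + ‖x - Om Q.center‖) ^ ((n : ℝ) + 1 - α)) ∂μ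

/-- The one-tailed Muckenhoupt constant `𝒜₂^α(σ,ω)`. -/
def a2tail {n : ℕ} (α : ℝ) (Om : Pt n → Pt n) (σ ω : Measure (Pt n)) : ℝ≥0∞ :=
  ⨆ Q : Cube n, repPoisson α Om Q (σ.restrict (qset Om Q)ᶜ) * ω (qset Om Q) /
    ENNReal.ofReal (Q.l ^ ((n : ℝ) - α))

/-- The set of common point masses of `σ` and `ω`. -/
def commonAtoms {n : ℕ} (σ ω : Measure (Pt n)) : Set (Pt n) := {p | 0 < σ {p} ∧ 0 < ω {p}}

/-- The punctured mass `ω(Q, 𝔓_{(σ,ω)})`. -/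
def punctMass {n : ℕ} (σ ω : Measure (Pt n)) (Om : Pt n → Pt n) (Q : Cube n) : ℝ≥0∞ :=
  ω (qset Om Q) - ⨆ p ∈ qset Om Q ∩ commonAtoms σ ω, ω {p}

/-- The punctured Muckenhoupt constant `A₂^{α,punct}(σ,ω)`. -/
def a2punct {n : ℕ} (α : ℝ) (Om : Pt n → Pt n) (σ ω : Measure (Pt n)) : ℝ≥0∞ :=
  ⨆ Q : Cube n, (punctMass σ ω Om Q / ENNReal.ofReal (Q.l ^ ((n : ℝ) - α))) *
    (σ (qset Om Q) / ENNReal.ofReal (Q.l ^ ((n : ℝ) - α)))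

/-- The full Muckenhoupt constant `𝔄₂^α = 𝒜₂^α + 𝒜₂^{α,*} + A₂^{α,punct} + A₂^{α,*,punct}`. -/
def muckA2 {n : ℕ} (α : ℝ) (Om : Pt n → Pt n) (σ ω : Measure (Pt n)) : ℝ≥0∞ :=
  a2tail α Om σ ω + a2tail α Om ω σ + a2punct α Om σ ω + a2punct α Om ω σ

/-- The dyadic cube of the grid translated by `t`, of scale `k` and position `m`. -/
def dCube {n : ℕ} (t : Pt n) (k : ℤ) (m : Fin n → ℤ) : Cube n :=
  ⟨WithLp.toLp 2 fun i => t i + (2:ℝ) ^ k * m i, (2:ℝ) ^ k, by positivity⟩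

/-- The dyadic grid with origin `t`. -/
def gridCubes {n : ℕ} (t : Pt n) : Set (Cube n) := {Q | ∃ k m, Q = dCube t k m}

/-- Alternate dyadic cubes: unions of `2ⁿ` grid cubes of half the side length. -/
def altCubes {n : ℕ} (t : Pt n) : Set (Cube n) :=
  {Q | ∃ (k : ℤ) (m : Fin n → ℤ), Q.l = (2:ℝ) ^ k ∧ ∀ i, Q.c i = t i + (2:ℝ) ^ (k - 1) * m i}

/-- The `μ`-average of `f` over `s`. -/
def cubeAvg {n : ℕ} (μ : Measure (Pt n)) (s : Set (Pt n)) (f : Pt n → ℝ) : ℝ :=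
  (∫ x in s, f x ∂μ) / (μ s).toReal

/-- The martingale (Haar) difference `Δ_Q^μ f`. -/
def haarDiff {n : ℕ} (μ : Measure (Pt n)) (Q : Cube n) (f : Pt n → ℝ) (x : Pt n) : ℝ :=
  ∑ e : Fin n → Bool,
    Set.indicator (Q.child e).set (fun _ => cubeAvg μ (Q.child e).set f - cubeAvg μ Q.set f) x

/-- `J` is `(r,ε)`-deeply embedded in `K`. -/
def deepEmb {n : ℕ} (r : ℕ) (ε : ℝ) (J K : Cube n) : Prop :=
  J.set ⊆ K.set ∧ (2:ℝ) ^ r * J.l ≤ K.l ∧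
    ENNReal.ofReal (J.l ^ ε * K.l ^ (1 - ε) / 2) ≤ sDistE J.set (frontier K.set)

/-- The maximal `(r,ε)`-deeply embedded dyadic subcubes of `K` from the grid `t`. -/
def maxDeep {n : ℕ} (r : ℕ) (ε : ℝ) (t : Pt n) (K : Cube n) : Set (Cube n) :=
  {J | J ∈ gridCubes t ∧ deepEmb r ε J K ∧
    ∀ J' ∈ gridCubes t, J.set ⊆ J'.set → deepEmb r ε J' K → J' = J}

/-- The grid children of a (possibly alternate) cube `K`. -/
def gridChildren {n : ℕ} (t : Pt n) (K : Cube n) : Set (Cube n) :=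
  {K' | K' ∈ gridCubes t ∧ K'.l = K.l / 2 ∧ K'.set ⊆ K.set}

/-- `P = π^ℓ K'` is the `ℓ`-fold grid ancestor of `K'`. -/
def gridAncestor {n : ℕ} (t : Pt n) (lev : ℕ) (K' P : Cube n) : Prop :=
  P ∈ gridCubes t ∧ P.l = (2:ℝ) ^ lev * K'.l ∧ K'.set ⊆ P.set

/-- The refinement `M^ℓ_{(r,ε)-deep,𝒟}(K)` of the maximal deeply embedded collection. -/
def maxDeepRef {n : ℕ} (r : ℕ) (ε : ℝ) (t : Pt n) (lev : ℕ) (K : Cube n) : Set (Cube n) :=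
  {J | (∃ K' ∈ gridChildren t K, ∃ P : Cube n, gridAncestor t lev K' P ∧ J ∈ maxDeep r ε t P) ∧
       ∃ L ∈ maxDeep r ε t K, J.set ⊆ L.set}

/-- The `ω`-average (barycenter) of the identity over the quasicube `Ω J`. -/
def cubeAvgVec {n : ℕ} (Om : Pt n → Pt n) (ω : Measure (Pt n)) (J : Cube n) : Pt n :=
  ((ω (qset Om J)).toReal)⁻¹ • ∫ x in qset Om J, x ∂ω

/-- The energy `‖P^ω_{ΩJ} x‖²_{L²(ω)} = ∫_{ΩJ} |x - E_{ΩJ}^ω x|² dω`. -/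
def energyTerm {n : ℕ} (Om : Pt n → Pt n) (ω : Measure (Pt n)) (J : Cube n) : ℝ≥0∞ :=
  ∫⁻ x in qset Om J, ENNReal.ofReal (‖x - cubeAvgVec Om ω J‖ ^ 2) ∂ω

/-- The energy sum `Σ_{J ∈ 𝒥} (P^α(J, 1_I σ)/ℓ(J))² ‖P_J^ω x‖²`. -/
def energySum {n : ℕ} (α : ℝ) (Om : Pt n → Pt n) (σ ω : Measure (Pt n)) (I : Cube n)
    (𝒥 : Set (Cube n)) : ℝ≥0∞ :=
  ∑' J : 𝒥, (stdPoisson α Om (J : Cube n) (σ.restrict (qset Om I)) /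
      ENNReal.ofReal ((J : Cube n).l)) ^ 2 * energyTerm Om ω (J : Cube n)

/-- `Ir` is a partition of `I` into dyadic subcubes from the grid `t`. -/
def isGridPartition {n : ℕ} (t : Pt n) (I : Cube n) (Ir : ℕ → Cube n) : Prop :=
  (∀ k, Ir k ∈ gridCubes t) ∧ (∀ k, (Ir k).set ⊆ I.set) ∧
  (∀ k k', k ≠ k' → Disjoint (Ir k).set (Ir k').set) ∧ (⋃ k, (Ir k).set) = I.set

/-- The strong energy constant `ℰ_α^{strong}(σ,ω)` with goodness parameters `r, ε`. -/
def strongEnergy {n : ℕ} (r : ℕ) (ε α : ℝ) (Om : Pt n → Pt n) (σ ω : Measure (Pt n)) : ℝ≥0∞ :=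
  sInf {E : ℝ≥0∞ |
    (∀ (t : Pt n) (I : Cube n), I ∈ gridCubes t → ∀ Ir : ℕ → Cube n, isGridPartition t I Ir →
      (∑' k : ℕ, energySum α Om σ ω I (maxDeep r ε t (Ir k))) ≤ E ^ 2 * σ (qset Om I)) ∧
    (∀ (t : Pt n) (I : Cube n), I ∈ altCubes t → ∀ lev : ℕ,
      energySum α Om σ ω I (maxDeepRef r ε t lev I) ≤ E ^ 2 * σ (qset Om I))}

/-- The translation `γ` of step `2^{-M}` indexed by `idx`. -/
def gamOf {n : ℕ} (M : ℕ) {Kc : ℕ} (idx : Fin n → Fin Kc) : Pt n :=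
  WithLp.toLp 2 fun i => (idx i : ℝ) * (2:ℝ) ^ (-(M : ℤ))

/-- The truncated dyadic grid built on `𝔻_M`, of size `2^{-N}`, translated by `γ`. -/
def truncGrid {n : ℕ} (M : ℕ) (N : ℤ) (γ : Pt n) : Set (Cube n) :=
  {Q | ∃ (k : ℤ) (m : Fin n → ℤ), -(M : ℤ) ≤ k ∧ k ≤ -N ∧ Q = dCube γ k m}

/-- The siblings of `Q`: the `3ⁿ` triadic children of `3Q`. -/
def siblings {n : ℕ} (Q : Cube n) : Set (Cube n) :=
  {Q' | ∃ a : Fin n → Fin 3, Q'.l = Q.l ∧ ∀ i, Q'.c i = Q.c i + ((a i : ℝ) - 1) * Q.l}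

/-- A grid `𝒟` is `Q`-good for the goodness parameters `r, ε`. -/
def QGoodGrid {n : ℕ} (r : ℕ) (ε : ℝ) (Q : Cube n) (𝒟 : Set (Cube n)) : Prop :=
  ∀ Q' ∈ siblings Q, ∀ I ∈ 𝒟, (2:ℝ) ^ r * Q.l ≤ I.l →
    ENNReal.ofReal (Q'.l ^ ε * I.l ^ (1 - ε) / 2) ≤ sDistE Q'.set (frontier I.set)

/-- A cube `I` is `r`-good in the grid `𝒟`. -/
def rGoodIn {n : ℕ} (r : ℕ) (ε : ℝ) (I : Cube n) (𝒟 : Set (Cube n)) : Prop :=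
  ∀ K ∈ 𝒟, (2:ℝ) ^ r * I.l ≤ K.l →
    ENNReal.ofReal (I.l ^ ε * K.l ^ (1 - ε) / 2) ≤ sDistE I.set (frontier K.set)

/-- The good projection `P^μ_{Q;good} f` relative to the grid `𝒟`. -/
def projGood {n : ℕ} (r : ℕ) (ε : ℝ) (Q : Cube n) (𝒟 : Set (Cube n)) (μ : Measure (Pt n))
    (f : Pt n → ℝ) (x : Pt n) : ℝ :=
  if QGoodGrid r ε Q 𝒟 then
    ∑' I : {I : Cube n // I ∈ 𝒟 ∧ rGoodIn r ε I 𝒟}, haarDiff μ (I : Cube n) f x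
  else 0

/-- The bad projection `P^μ_{Q;bad} f = f - P^μ_{Q;good} f`. -/
def projBad {n : ℕ} (r : ℕ) (ε : ℝ) (Q : Cube n) (𝒟 : Set (Cube n)) (μ : Measure (Pt n))
    (f : Pt n → ℝ) (x : Pt n) : ℝ := f x - projGood r ε Q 𝒟 μ f x

/-- An 'appropriate' function: supported in a cube `L` with mean zero, with `−N > ℓ(L) + r`,
and constant on the tiles of `𝔻_M`. -/
def Appropriate {n : ℕ} (μ : Measure (Pt n)) (M : ℕ) (N : ℤ) (r : ℕ) (f : Pt n → ℝ) : Prop :=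
  ∃ L : Cube n, (∀ x, x ∉ L.set → f x = 0) ∧ (∫ x in L.set, f x ∂μ) = 0 ∧
    L.l + (r : ℝ) < (-N : ℝ) ∧
    ∀ m : Fin n → ℤ, ∀ x ∈ (dCube 0 (-(M : ℤ)) m).set, ∀ y ∈ (dCube 0 (-(M : ℤ)) m).set, f x = f y

/-- Pairs `(I,J)` of grid cubes with `J ⊂ 3I` and `ρ`-comparable side lengths. -/
def pairsNear {n : ℕ} (t : Pt n) (ρ : ℕ) : Set (Cube n × Cube n) :=
  {p | p.1 ∈ gridCubes t ∧ p.2 ∈ gridCubes t ∧ p.2.set ⊆ p.1.tri.set ∧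
       (2:ℝ) ^ (-(ρ:ℤ)) * p.1.l ≤ p.2.l ∧ p.2.l ≤ (2:ℝ) ^ (ρ:ℤ) * p.1.l}

/-- Pairs `(I,J)` of grid cubes with `I ⊂ 3J` and `ρ`-comparable side lengths. -/
def pairsNear' {n : ℕ} (t : Pt n) (ρ : ℕ) : Set (Cube n × Cube n) :=
  {p | p.1 ∈ gridCubes t ∧ p.2 ∈ gridCubes t ∧ p.1.set ⊆ p.2.tri.set ∧
       (2:ℝ) ^ (-(ρ:ℤ)) * p.1.l ≤ p.2.l ∧ p.2.l ≤ (2:ℝ) ^ (ρ:ℤ) * p.1.l}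

/-- The inner product `⟨T^α_σ Δ_I^σ f, Δ_J^ω g⟩_ω`. -/
def innerTT {n : ℕ} {α : ℝ} {K : CZKernel n α} (τ : Truncation K) (σ ω : Measure (Pt n))
    (I J : Cube n) (f g : Pt n → ℝ) : ℝ :=
  ∫ x, τ.op σ (haarDiff σ I f) x * haarDiff ω J g x ∂ω

/-- The form `A₁(f,g)`, summing over comparable nearby pairs with `J ⊂ 3I`. -/
def formA1 {n : ℕ} {α : ℝ} {K : CZKernel n α} (τ : Truncation K) (σ ω : Measure (Pt n))
    (t : Pt n) (ρ : ℕ) (f g : Pt n → ℝ) : ℝ :=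
  ∑' p : pairsNear t ρ, innerTT τ σ ω p.1.1 p.1.2 f g

/-- The form `A₂(f,g)`, summing over comparable nearby pairs with `I ⊂ 3J`. -/
def formA2 {n : ℕ} {α : ℝ} {K : CZKernel n α} (τ : Truncation K) (σ ω : Measure (Pt n))
    (t : Pt n) (ρ : ℕ) (f g : Pt n → ℝ) : ℝ :=
  ∑' p : pairsNear' t ρ, innerTT τ σ ω p.1.1 p.1.2 f g

/-- `I` and `J` are `r`-close in the grid `t`: comparable side lengths, touching,
and one contained in the triple of the other. -/
def rClosePairs {n : ℕ} (t : Pt n) (r : ℕ) : Set (Cube n × Cube n) :=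
  {p | p.1 ∈ gridCubes t ∧ p.2 ∈ gridCubes t ∧
       (2:ℝ) ^ (-(r:ℤ)) * p.1.l ≤ p.2.l ∧ p.2.l ≤ (2:ℝ) ^ (r:ℤ) * p.1.l ∧
       Touching p.1 p.2 ∧ (p.1.set ⊆ p.2.tri.set ∨ p.2.set ⊆ p.1.tri.set)}

/-- The bilinear form `ℬ(f,g) = ⟨T_σ^α f, g⟩_ω`. -/
def formB {n : ℕ} {α : ℝ} {K : CZKernel n α} (τ : Truncation K) (σ ω : Measure (Pt n))
    (f g : Pt n → ℝ) : ℝ := ∫ x, τ.op σ f x * g x ∂ω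

/-- The bilinear form `𝒞_𝒟(f,g)`, summing over `r`-close pairs in the grid. -/
def formC {n : ℕ} {α : ℝ} {K : CZKernel n α} (τ : Truncation K) (σ ω : Measure (Pt n))
    (t : Pt n) (r : ℕ) (f g : Pt n → ℝ) : ℝ :=
  ∑' p : rClosePairs t r, innerTT τ σ ω p.1.1 p.1.2 f g

/-- The subbilinear form `𝒮_𝒟(f,g)`, summing absolute values over `r`-close pairs. -/
def formS {n : ℕ} {α : ℝ} {K : CZKernel n α} (τ : Truncation K) (σ ω : Measure (Pt n))
    (t : Pt n) (r : ℕ) (f g : Pt n → ℝ) : ℝ≥0∞ :=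
  ∑' p : rClosePairs t r, ENNReal.ofReal |innerTT τ σ ω p.1.1 p.1.2 f g|

/-- Two cubes are `ρ`-close: `ρ`-comparable side lengths, in a common grid, touching, and
one contained in the triple of the other. -/
def rhoClose {n : ℕ} (ρ : ℕ) (Q R : Cube n) : Prop :=
  (2:ℝ) ^ (-(ρ:ℤ)) * Q.l ≤ R.l ∧ R.l ≤ (2:ℝ) ^ (ρ:ℤ) * Q.l ∧
  (∃ t : Pt n, Q ∈ gridCubes t ∧ R ∈ gridCubes t) ∧
  Touching Q R ∧ (Q.set ⊆ R.tri.set ∨ R.set ⊆ Q.tri.set)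

/-- The left vertical face of width `λℓ(K)` of the lower-left corner `K_- ∖ K_λ` of a
square `K` in the plane. -/
def leftFace (K : Cube 2) (lam : ℝ) : Set (Pt 2) :=
  ((K.child fun _ => false).set \ K.inn lam) ∩ {x | x 0 ≤ K.c 0 + lam * K.l}

/-- The horizontal translation by `k` steps of size `s` in the plane. -/
def horizTrans (k : ℤ) (s : ℝ) : Pt 2 := WithLp.toLp 2 fun i => if i = 0 then (k : ℝ) * s else 0

/-!
Translate `J` by consecutive multiples of the step `s = λℓ(J)`, with total shift less than `ℓ(J)/2`.
On the child of the `j`-th translate the martingale difference of `1_R` is a constant `d_j`, and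
that child contains the part `T_j` of the initial child at distance at least `js` from its lower
face. Hence `|d_j| ≤ min (1, ω(R) / ω(T_j))`, while the `j`-th face lies in `T_j ∖ T_{j+2}`. The sum
of `d_j² ω(face_j)` is thus a Riemann sum, with overlap two, for `∫ min (1, ω(R) / t)² dt`, which is
of size `ω(R)` however many translates there are. About `λN` such blocks cover `N` translates, so
the average over `N` translates is of size `(λ + 1/N) ω(R)`, and `ℓ(J) ≤ 2^ρ Λ s` gives `1/N ≤ 2^ρ
λ`.
-/

section Sums

theorem sum_range_add_right_sub (u : ℕ → ℝ) (m p : ℕ) :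
    ∑ j ∈ Finset.range m, (u (j + p) - u j) =
      ∑ j ∈ Finset.range p, u (m + j) - ∑ j ∈ Finset.range p, u j := by
  have hmp := Finset.sum_range_add u m p
  rw [add_comm m p, Finset.sum_range_add u p m] at hmp
  simp only [Finset.sum_sub_distrib, add_comm _ p]
  linarith

theorem sum_range_le_nsmul_of_block_le {M : Type*} [AddCommMonoid M] [PartialOrder M]
    [IsOrderedAddMonoid M] [CanonicallyOrderedAdd M] {g : ℕ → M} {m : ℕ} {B : M} (hm : 0 < m)
    (hg : ∀ k, ∑ j ∈ Finset.range m, g (k + j) ≤ B) (N : ℕ) :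
    ∑ j ∈ Finset.range N, g j ≤ (N / m + 1) • B := by
  have hblocks : ∀ q : ℕ, ∑ j ∈ Finset.range (m * q), g j ≤ q • B := by
    intro q
    induction q with
    | zero => simp
    | succ q ih =>
      rw [Nat.mul_succ, Finset.sum_range_add, succ_nsmul]
      exact add_le_add ih (hg _)
  refine (Finset.sum_le_sum_of_subset ?_).trans (hblocks _)
  exact Finset.range_mono (Nat.lt_mul_div_succ N hm).le

theorem sum_Icc_int_eq_sum_range {M : Type*} [AddCommMonoid M] (g : ℤ → M) (a b : ℤ) :
    ∑ k ∈ Finset.Icc a b, g k = ∑ j ∈ Finset.range (b + 1 - a).toNat, g (a + j) :=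
  Finset.sum_map _ _ _

/- Up to a constant, `4 * A ^ 2 / (A + s)` is minus the antiderivative of `(2 * A / (A + s)) ^ 2`,
which dominates `min (1, A / s) ^ 2`. -/
theorem sq_mul_sub_le_div_sub_div {d A s t : ℝ} (hs : 0 ≤ s) (hst : s ≤ t)
    (hd : |d| ≤ 1) (hdt : |d| * t ≤ A) :
    d ^ 2 * (t - s) ≤ 4 * A ^ 2 / (A + s) - 4 * A ^ 2 / (A + t) := by
  have ht : 0 ≤ t := hs.trans hst
  have hA : 0 ≤ A := (by positivity : 0 ≤ |d| * t).trans hdt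
  rcases hA.eq_or_lt with rfl | hA
  · have hd0 : |d| * (t - s) ≤ 0 := by nlinarith [abs_nonneg d]
    have hd2 : d ^ 2 * (t - s) ≤ 0 := by
      rw [← sq_abs, sq, mul_assoc]
      exact mul_nonpos_of_nonneg_of_nonpos (abs_nonneg d) hd0
    simpa using hd2
  · have hd2 : d ^ 2 * (A + t) ^ 2 ≤ 4 * A ^ 2 := by
      have : |d| * (A + t) ≤ 2 * A := by nlinarith
      calc d ^ 2 * (A + t) ^ 2 = (|d| * (A + t)) ^ 2 := by rw [mul_pow, sq_abs]
        _ ≤ (2 * A) ^ 2 := by gcongr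
        _ = 4 * A ^ 2 := by ring
    have hdiff : 4 * A ^ 2 / (A + s) - 4 * A ^ 2 / (A + t)
        = 4 * A ^ 2 * (t - s) / ((A + s) * (A + t)) := by
      field_simp
      ring
    rw [hdiff, le_div_iff₀ (by positivity)]
    calc d ^ 2 * (t - s) * ((A + s) * (A + t)) ≤ d ^ 2 * (t - s) * ((A + t) * (A + t)) := by
          have : 0 ≤ t - s := sub_nonneg.2 hst
          gcongr
      _ = d ^ 2 * (A + t) ^ 2 * (t - s) := by ring
      _ ≤ 4 * A ^ 2 * (t - s) := mul_le_mul_of_nonneg_right hd2 (sub_nonneg.2 hst)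

theorem sum_sq_mul_sub_le {d t : ℕ → ℝ} {A : ℝ} (ht : Antitone t) (ht0 : ∀ j, 0 ≤ t j)
    (hd : ∀ j, |d j| ≤ 1) (hdt : ∀ j, |d j| * t j ≤ A) (m p : ℕ) :
    ∑ j ∈ Finset.range m, d j ^ 2 * (t j - t (j + p)) ≤ p * (4 * A) := by
  have hA : 0 ≤ A := (mul_nonneg (abs_nonneg _) (ht0 0)).trans (hdt 0)
  set u : ℕ → ℝ := fun j => 4 * A ^ 2 / (A + t j)
  have hu0 : ∀ j, 0 ≤ u j := fun j => div_nonneg (by positivity) (add_nonneg hA (ht0 j))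
  have huA : ∀ j, u j ≤ 4 * A := fun j =>
    div_le_of_le_mul₀ (add_nonneg hA (ht0 j)) (by positivity) (by nlinarith [mul_nonneg hA (ht0 j)])
  calc ∑ j ∈ Finset.range m, d j ^ 2 * (t j - t (j + p))
      ≤ ∑ j ∈ Finset.range m, (u (j + p) - u j) := Finset.sum_le_sum fun j _ =>
        sq_mul_sub_le_div_sub_div (ht0 _) (ht (Nat.le_add_right j p)) (hd j) (hdt j)
    _ = ∑ j ∈ Finset.range p, u (m + j) - ∑ j ∈ Finset.range p, u j :=
        sum_range_add_right_sub u m p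
    _ ≤ ∑ j ∈ Finset.range p, u (m + j) :=
        sub_le_self _ (Finset.sum_nonneg fun j _ => hu0 j)
    _ ≤ p * (4 * A) := by
        simpa using Finset.sum_le_card_nsmul (Finset.range p) _ _ fun j _ => huA (m + j)

end Sums

namespace Cube

variable {n : ℕ} (Q : Cube n)

theorem set_eq_preimage_pi :
    Q.set = WithLp.ofLp ⁻¹' univ.pi fun i => Ico (Q.c i) (Q.c i + Q.l) := by
  ext x
  simp [set]

theorem measurableSet_set : MeasurableSet Q.set := by
  rw [set_eq_preimage_pi]
  exact (MeasurableSet.univ_pi fun _ => measurableSet_Ico).preimage (WithLp.measurable_ofLp 2 _)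

theorem isBounded_set : Bornology.IsBounded Q.set := by
  rw [set_eq_preimage_pi]
  exact (PiLp.antilipschitzWith_ofLp 2 _).isBounded_preimage
    (Bornology.IsBounded.pi fun _ => Metric.isBounded_Ico _ _)

theorem measure_set_ne_top (μ : Measure (Pt n)) [IsLocallyFiniteMeasure μ] : μ Q.set ≠ ∞ :=
  Q.isBounded_set.measure_lt_top.ne

theorem child_subset (e : Fin n → Bool) : (Q.child e).set ⊆ Q.set := by
  intro x hx i
  have hi := hx i
  have hl := Q.lpos
  simp only [child] at hi
  split_ifs at hi <;> constructor <;> linarith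

variable {Q} in
theorem eq_of_mem_child {e e' : Fin n → Bool} {x : Pt n}
    (hx : x ∈ (Q.child e).set) (hx' : x ∈ (Q.child e').set) : e = e' := by
  funext i
  have hi := hx i
  have hi' := hx' i
  simp only [child] at hi hi'
  cases he : e i <;> cases he' : e' i <;> simp only [he, he', if_true, if_false,
    Bool.false_eq_true] at hi hi' ⊢ <;> linarith

theorem child_trans (γ : Pt n) (e : Fin n → Bool) : (Q.trans γ).child e = (Q.child e).trans γ := by
  simp only [child, trans, add_right_comm]

theorem trans_single_trans_single (i : Fin n) (a b : ℝ) :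
    (Q.trans (EuclideanSpace.single i a)).trans (EuclideanSpace.single i b) =
      Q.trans (EuclideanSpace.single i (a + b)) := by
  have hadd : EuclideanSpace.single i (a + b) = _ := PiLp.single_add 2 i
  simp only [trans, hadd, PiLp.add_apply, add_assoc]

/-- The part of a cube within distance `w` of its lower face orthogonal to the `i`-th axis. -/
def lowerSlab (i : Fin n) (w : ℝ) : Set (Pt n) := {x ∈ Q.set | x i ≤ Q.c i + w}

/-- The part of a cube at distance at least `a` from its lower face orthogonal to the `i`-th
axis. -/
def upperSlab (i : Fin n) (a : ℝ) : Set (Pt n) := {x ∈ Q.set | Q.c i + a ≤ x i}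

theorem measurableSet_lowerSlab (i : Fin n) (w : ℝ) : MeasurableSet (Q.lowerSlab i w) :=
  Q.measurableSet_set.inter <|
    measurableSet_le (f := fun x : Pt n => x i) (by fun_prop) measurable_const

theorem measurableSet_upperSlab (i : Fin n) (a : ℝ) : MeasurableSet (Q.upperSlab i a) :=
  Q.measurableSet_set.inter <|
    measurableSet_le (g := fun x : Pt n => x i) measurable_const (by fun_prop)

theorem upperSlab_subset (i : Fin n) (a : ℝ) : Q.upperSlab i a ⊆ Q.set := fun _ hx => hx.1

theorem antitone_upperSlab (i : Fin n) : Antitone (Q.upperSlab i) :=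
  fun _ _ hab _ hx => ⟨hx.1, (add_le_add_right hab _).trans hx.2⟩

theorem measure_upperSlab_ne_top (μ : Measure (Pt n)) [IsLocallyFiniteMeasure μ] (i : Fin n)
    (a : ℝ) : μ (Q.upperSlab i a) ≠ ∞ :=
  measure_ne_top_of_subset (Q.upperSlab_subset i a) (Q.measure_set_ne_top μ)

theorem upperSlab_subset_trans_single (i : Fin n) {a : ℝ} (ha : 0 ≤ a) :
    Q.upperSlab i a ⊆ (Q.trans (EuclideanSpace.single i a)).set := by
  rintro x ⟨hxQ, hxi⟩ k
  rcases eq_or_ne k i with rfl | hki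
  · have := hxQ k
    simp only [trans, PiLp.single_apply, if_true]
    constructor <;> linarith
  · simpa [trans, hki] using hxQ k

theorem lowerSlab_trans_single_subset (i : Fin n) {a b w : ℝ} (ha : 0 ≤ a) (hl : a + w < Q.l)
    (hb : a + w < b) :
    (Q.trans (EuclideanSpace.single i a)).lowerSlab i w ⊆ Q.upperSlab i a \ Q.upperSlab i b := by
  rintro x ⟨hx, hxi⟩
  have hxi' : x i ≤ Q.c i + a + w := by simpa [trans] using hxi
  have hxa : Q.c i + a ≤ x i := by simpa [trans] using (hx i).1
  refine ⟨⟨fun k => ?_, hxa⟩, fun hxb => by linarith [hxb.2]⟩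
  rcases eq_or_ne k i with rfl | hki
  · constructor <;> linarith
  · simpa [trans, hki] using hx k

theorem measure_lowerSlab_trans_single_le (μ : Measure (Pt n)) [IsLocallyFiniteMeasure μ]
    (i : Fin n) {a b w : ℝ} (ha : 0 ≤ a) (hab : a ≤ b) (hl : a + w < Q.l) (hb : a + w < b) :
    μ ((Q.trans (EuclideanSpace.single i a)).lowerSlab i w) ≤
      ENNReal.ofReal (μ.real (Q.upperSlab i a) - μ.real (Q.upperSlab i b)) := by
  have hfin := Q.measure_upperSlab_ne_top μ i a
  rw [← measureReal_sdiff (Q.antitone_upperSlab i hab) (Q.measurableSet_upperSlab i b) hfin,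
    ofReal_measureReal (measure_ne_top_of_subset sdiff_subset hfin)]
  exact measure_mono (Q.lowerSlab_trans_single_subset i ha hl hb)

end Cube

section Averages

variable {n : ℕ} {μ : Measure (Pt n)} {E s t T : Set (Pt n)}

theorem cubeAvg_indic (μ : Measure (Pt n)) (s : Set (Pt n)) (hE : MeasurableSet E) :
    cubeAvg μ s (indic E) = μ.real (E ∩ s) / μ.real s := by
  rw [cubeAvg, indic, integral_indicator_one hE, measureReal_restrict_apply hE, measureReal_def μ s]

theorem cubeAvg_indic_nonneg (μ : Measure (Pt n)) (s : Set (Pt n)) (hE : MeasurableSet E) :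
    0 ≤ cubeAvg μ s (indic E) := by
  rw [cubeAvg_indic μ s hE]
  positivity

theorem cubeAvg_indic_le_one (hE : MeasurableSet E) (hs : μ s ≠ ∞) :
    cubeAvg μ s (indic E) ≤ 1 := by
  rw [cubeAvg_indic μ s hE]
  exact div_le_one_of_le₀ (measureReal_mono inter_subset_right hs) measureReal_nonneg

theorem cubeAvg_indic_mul_le (hE : MeasurableSet E) (hEtop : μ E ≠ ∞) (hs : μ s ≠ ∞)
    (hTs : T ⊆ s) : cubeAvg μ s (indic E) * μ.real T ≤ μ.real E :=
  calc cubeAvg μ s (indic E) * μ.real T ≤ cubeAvg μ s (indic E) * μ.real s :=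
        mul_le_mul_of_nonneg_left (measureReal_mono hTs hs) (cubeAvg_indic_nonneg μ s hE)
    _ ≤ μ.real (E ∩ s) := by
        rw [cubeAvg_indic μ s hE]
        exact mul_le_of_le_div₀ measureReal_nonneg measureReal_nonneg le_rfl
    _ ≤ μ.real E := measureReal_mono inter_subset_left hEtop

theorem abs_cubeAvg_indic_sub_le_one (hE : MeasurableSet E) (hs : μ s ≠ ∞) (ht : μ t ≠ ∞) :
    |cubeAvg μ s (indic E) - cubeAvg μ t (indic E)| ≤ 1 :=
  abs_sub_le_of_nonneg_of_le (cubeAvg_indic_nonneg μ s hE) (cubeAvg_indic_le_one hE hs)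
    (cubeAvg_indic_nonneg μ t hE) (cubeAvg_indic_le_one hE ht)

theorem abs_cubeAvg_indic_sub_mul_le (hE : MeasurableSet E) (hEtop : μ E ≠ ∞) (hs : μ s ≠ ∞)
    (ht : μ t ≠ ∞) (hTs : T ⊆ s) (hTt : T ⊆ t) :
    |cubeAvg μ s (indic E) - cubeAvg μ t (indic E)| * μ.real T ≤ μ.real E := by
  rw [← abs_of_nonneg (measureReal_nonneg (μ := μ) (s := T)), ← abs_mul, sub_mul]
  exact abs_sub_le_of_nonneg_of_le
    (mul_nonneg (cubeAvg_indic_nonneg μ s hE) measureReal_nonneg)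
    (cubeAvg_indic_mul_le hE hEtop hs hTs)
    (mul_nonneg (cubeAvg_indic_nonneg μ t hE) measureReal_nonneg)
    (cubeAvg_indic_mul_le hE hEtop ht hTt)

end Averages

section FaceEnergy

variable {n : ℕ}

theorem haarDiff_of_mem_child (μ : Measure (Pt n)) (Q : Cube n) (f : Pt n → ℝ)
    {e : Fin n → Bool} {x : Pt n} (hx : x ∈ (Q.child e).set) :
    haarDiff μ Q f x = cubeAvg μ (Q.child e).set f - cubeAvg μ Q.set f := by
  rw [haarDiff, Finset.sum_eq_single_of_mem e (Finset.mem_univ e) fun e' _ hne =>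
    Set.indicator_of_notMem (fun hx' => hne (Cube.eq_of_mem_child hx' hx)) _,
    Set.indicator_of_mem hx]

/-- The energy `∫ |Δ_Q^μ f|² dμ` over the slab of width `w` along the lower face, orthogonal to
the `i`-th axis, of the child `e` of `Q`. -/
def faceEnergy (μ : Measure (Pt n)) (f : Pt n → ℝ) (i : Fin n) (e : Fin n → Bool) (w : ℝ)
    (Q : Cube n) : ℝ≥0∞ :=
  ∫⁻ x in (Q.child e).lowerSlab i w, ENNReal.ofReal (haarDiff μ Q f x ^ 2) ∂μ

theorem faceEnergy_eq (μ : Measure (Pt n)) (f : Pt n → ℝ) (i : Fin n) (e : Fin n → Bool) (w : ℝ)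
    (Q : Cube n) :
    faceEnergy μ f i e w Q =
      ENNReal.ofReal ((cubeAvg μ (Q.child e).set f - cubeAvg μ Q.set f) ^ 2) *
        μ ((Q.child e).lowerSlab i w) := by
  rw [faceEnergy, ← setLIntegral_const]
  exact setLIntegral_congr_fun ((Q.child e).measurableSet_lowerSlab i w) fun x hx => by
    simp only [haarDiff_of_mem_child μ Q f hx.1]

variable (μ : Measure (Pt n)) [IsLocallyFiniteMeasure μ] (Q : Cube n) {E : Set (Pt n)}
  (i : Fin n) (e : Fin n → Bool) {s : ℝ}

theorem faceEnergy_trans_single_le (f : Pt n → ℝ) {a b w : ℝ} (ha : 0 ≤ a) (hab : a ≤ b)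
    (hl : a + w < Q.l / 2) (hb : a + w < b) :
    faceEnergy μ f i e w (Q.trans (EuclideanSpace.single i a)) ≤
      ENNReal.ofReal ((cubeAvg μ ((Q.trans (EuclideanSpace.single i a)).child e).set f -
          cubeAvg μ (Q.trans (EuclideanSpace.single i a)).set f) ^ 2 *
        (μ.real ((Q.child e).upperSlab i a) - μ.real ((Q.child e).upperSlab i b))) := by
  rw [faceEnergy_eq, ENNReal.ofReal_mul (sq_nonneg _)]
  refine mul_le_mul_right ?_ _
  rw [Cube.child_trans]
  exact (Q.child e).measure_lowerSlab_trans_single_le μ i ha hab hl hb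

theorem sum_faceEnergy_le_of_mul_lt (hE : MeasurableSet E) (hs : 0 < s) {m : ℕ}
    (hm : m * s < Q.l / 2) :
    ∑ j ∈ Finset.range m,
        faceEnergy μ (indic E) i e s (Q.trans (EuclideanSpace.single i (j * s))) ≤
      8 * μ E := by
  rcases eq_or_ne (μ E) ∞ with hEtop | hEtop
  · simp [hEtop]
  set K : ℕ → Cube n := fun j => Q.trans (EuclideanSpace.single i (j * s))
  set d : ℕ → ℝ := fun j =>
    cubeAvg μ ((K j).child e).set (indic E) - cubeAvg μ (K j).set (indic E)
  set T : ℕ → Set (Pt n) := fun j => (Q.child e).upperSlab i (j * s)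
  have hT : Antitone fun j => μ.real (T j) := fun j k hjk =>
    measureReal_mono ((Q.child e).antitone_upperSlab i (by gcongr))
      ((Q.child e).measure_upperSlab_ne_top μ i _)
  have hTchild : ∀ j, T j ⊆ ((K j).child e).set := fun j => by
    rw [Cube.child_trans]
    exact (Q.child e).upperSlab_subset_trans_single i (by positivity)
  have hd : ∀ j, |d j| ≤ 1 := fun j => abs_cubeAvg_indic_sub_le_one hE
    (Cube.measure_set_ne_top _ μ) (Cube.measure_set_ne_top _ μ)
  have hdT : ∀ j, |d j| * μ.real (T j) ≤ μ.real E := fun j =>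
    abs_cubeAvg_indic_sub_mul_le hE hEtop (Cube.measure_set_ne_top _ μ)
      (Cube.measure_set_ne_top _ μ) (hTchild j) ((hTchild j).trans (Cube.child_subset _ e))
  have hface : ∀ j ∈ Finset.range m, faceEnergy μ (indic E) i e s (K j) ≤
      ENNReal.ofReal (d j ^ 2 * (μ.real (T j) - μ.real (T (j + 2)))) := by
    intro j hj
    have hjs : j * s + s < Q.l / 2 := by
      have : (j + 1 : ℝ) ≤ m := mod_cast Finset.mem_range.1 hj
      nlinarith
    refine faceEnergy_trans_single_le μ Q i e _ (by positivity) ?_ hjs ?_ <;>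
      push_cast <;> linarith
  calc ∑ j ∈ Finset.range m, faceEnergy μ (indic E) i e s (K j)
      ≤ ∑ j ∈ Finset.range m, ENNReal.ofReal (d j ^ 2 * (μ.real (T j) - μ.real (T (j + 2)))) :=
        Finset.sum_le_sum hface
    _ = ENNReal.ofReal (∑ j ∈ Finset.range m, d j ^ 2 * (μ.real (T j) - μ.real (T (j + 2)))) :=
        (ENNReal.ofReal_sum_of_nonneg fun j _ => mul_nonneg (sq_nonneg _)
          (sub_nonneg.2 (hT (Nat.le_add_right j 2)))).symm
    _ ≤ ENNReal.ofReal (8 * μ.real E) := ENNReal.ofReal_le_ofReal <| by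
        have := sum_sq_mul_sub_le hT (fun _ => measureReal_nonneg) hd hdT m 2
        push_cast at this
        linarith
    _ = 8 * μ E := by
        rw [ENNReal.ofReal_mul (by norm_num), ofReal_measureReal hEtop, ENNReal.ofReal_ofNat]

theorem exists_pos_nat_mul_lt_half {s l : ℝ} (hs : 0 < s) (hsl : s < l / 2) :
    ∃ m : ℕ, 0 < m ∧ m * s < l / 2 ∧ l ≤ 4 * (m * s) := by
  set a := l / 2 / s with ha
  have h1a : 1 < a := (one_lt_div hs).2 hsl
  have hceil : 1 < ⌈a⌉₊ := Nat.lt_ceil.2 (mod_cast h1a)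
  obtain ⟨m, hm⟩ := Nat.exists_eq_add_of_le' hceil.le
  have hm1 : (1 : ℝ) ≤ m := mod_cast (by lia : 1 ≤ m)
  have hlt : (m : ℝ) < a := Nat.lt_ceil.1 (by lia)
  have hle : a ≤ m + 1 := by simpa [hm] using Nat.le_ceil a
  rw [ha, lt_div_iff₀ hs] at hlt
  rw [ha, div_le_iff₀ hs] at hle
  exact ⟨m, by lia, hlt, by nlinarith⟩

theorem sum_faceEnergy_le (hE : MeasurableSet E) (hs : 0 < s) (hsl : s < Q.l / 2) (N : ℕ) :
    ∑ j ∈ Finset.range N,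
        faceEnergy μ (indic E) i e s (Q.trans (EuclideanSpace.single i (j * s))) ≤
      ENNReal.ofReal (8 * (4 * N * s / Q.l + 1)) * μ E := by
  obtain ⟨m, hm, hms, hlm⟩ := exists_pos_nat_mul_lt_half hs hsl
  have hblock : ∀ k : ℕ, ∑ j ∈ Finset.range m, faceEnergy μ (indic E) i e s
      (Q.trans (EuclideanSpace.single i ((k + j : ℕ) * s))) ≤ 8 * μ E := by
    intro k
    simpa only [Cube.trans_single_trans_single, ← add_mul, ← Nat.cast_add] using
      sum_faceEnergy_le_of_mul_lt μ (Q.trans (EuclideanSpace.single i (k * s))) i e hE hs hms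
  have hcount : ((N / m + 1 : ℕ) : ℝ) ≤ 4 * N * s / Q.l + 1 := by
    have hl := Q.lpos
    have hdiv : ((N / m : ℕ) : ℝ) ≤ N / m := Nat.cast_div_le
    have : (N : ℝ) / m ≤ 4 * N * s / Q.l := by
      rw [div_le_div_iff₀ (by positivity) hl]
      nlinarith [N.cast_nonneg (α := ℝ)]
    push_cast
    linarith
  calc _ ≤ (N / m + 1) • (8 * μ E) := sum_range_le_nsmul_of_block_le hm hblock N
    _ = ENNReal.ofReal (8 * (N / m + 1 : ℕ)) * μ E := by
        rw [nsmul_eq_mul, ENNReal.ofReal_mul (by norm_num), ENNReal.ofReal_natCast,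
          ENNReal.ofReal_ofNat]
        ring
    _ ≤ ENNReal.ofReal (8 * (4 * N * s / Q.l + 1)) * μ E := by gcongr

end FaceEnergy

section HorizontalSurgery

theorem horizTrans_eq_single (k : ℤ) (s : ℝ) :
    horizTrans k s = EuclideanSpace.single 0 (k * s) := by
  ext i
  simp [horizTrans]

theorem leftFace_subset_lowerSlab (K : Cube 2) (lam : ℝ) :
    leftFace K lam ⊆ (K.child fun _ => false).lowerSlab 0 (lam * K.l) :=
  fun _ hx => ⟨hx.1.1, by simpa [Cube.child] using hx.2⟩

theorem card_Icc_neg_natCast (N : ℕ) : (Finset.Icc (-N : ℤ) N).card = 2 * N + 1 := by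
  rw [Int.card_Icc]
  lia

theorem sum_setLIntegral_haarDiff_leftFace_le (ω : Measure (Pt 2)) [IsLocallyFiniteMeasure ω]
    (J : Cube 2) {E : Set (Pt 2)} (hE : MeasurableSet E) {lam : ℝ} (hlam : 0 < lam)
    (hlam' : lam < 1 / 2) (a b : ℤ) :
    ∑ k ∈ Finset.Icc a b,
        ∫⁻ x in leftFace (J.trans (horizTrans k (lam * J.l))) lam,
          ENNReal.ofReal (haarDiff ω (J.trans (horizTrans k (lam * J.l))) (indic E) x ^ 2) ∂ω ≤
      ENNReal.ofReal (8 * (4 * (Finset.Icc a b).card * lam + 1)) * ω E := by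
  have hJ := J.lpos
  set s := lam * J.l with hs
  set e : Fin 2 → Bool := fun _ => false
  set J₀ := J.trans (horizTrans a s)
  have htrans : ∀ j : ℕ,
      J.trans (horizTrans (a + j) s) = J₀.trans (EuclideanSpace.single 0 (j * s)) := fun j => by
    simp only [J₀, horizTrans_eq_single, Cube.trans_single_trans_single, ← add_mul, Int.cast_add,
      Int.cast_natCast]
  rw [Int.card_Icc]
  set N := (b + 1 - a).toNat
  calc _ ≤ ∑ k ∈ Finset.Icc a b, faceEnergy ω (indic E) 0 e s (J.trans (horizTrans k s)) :=
        Finset.sum_le_sum fun k _ => lintegral_mono_set (leftFace_subset_lowerSlab _ lam)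
    _ = ∑ j ∈ Finset.range N,
          faceEnergy ω (indic E) 0 e s (J₀.trans (EuclideanSpace.single 0 (j * s))) := by
        simp only [sum_Icc_int_eq_sum_range, htrans, N]
    _ ≤ ENNReal.ofReal (8 * (4 * N * s / J.l + 1)) * ω E :=
        sum_faceEnergy_le ω J₀ 0 e hE (by positivity)
          (by change lam * J.l < J.l / 2; nlinarith) N
    _ = ENNReal.ofReal (8 * (4 * N * lam + 1)) * ω E := by
        rw [hs, ← mul_assoc, mul_div_cancel_right₀ _ hJ.ne']

theorem mul_add_div_le_mul_sqrt {D lam : ℝ} {Lam : ℕ} (hlam : 0 < lam) (hlam' : lam ≤ 1)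
    (hD : 1 ≤ D * (Lam * lam)) : 32 * lam + 8 / (2 * Lam + 1) ≤ (32 + 8 * D) * √lam := by
  have hLam : (0 : ℝ) ≤ Lam * lam := by positivity
  have hD0 : 0 < D := pos_of_mul_pos_left (one_pos.trans_le hD) hLam
  have hdiv : 8 / (2 * (Lam : ℝ) + 1) ≤ 8 * D * lam := by
    rw [div_le_iff₀ (by positivity)]
    nlinarith [mul_pos hD0 hlam]
  calc 32 * lam + 8 / (2 * Lam + 1) ≤ (32 + 8 * D) * lam := by linarith
    _ ≤ (32 + 8 * D) * √lam := by
        gcongr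
        exact Real.le_sqrt_of_sq_le (pow_le_of_le_one hlam.le hlam' two_ne_zero)

theorem one_le_zpow_mul_of_comparable {ρ j r x : ℝ} {p : ℤ} (hρ : 0 < ρ) (hj : 0 < j)
    (hjr : ρ ^ (-p) * j ≤ r) (hrx : r ≤ x * j) : 1 ≤ ρ ^ p * x := by
  have : ρ ^ (-p) ≤ x := le_of_mul_le_mul_right (hjr.trans hrx) hj
  rwa [zpow_neg, inv_le_iff_one_le_mul₀' (by positivity)] at this

theorem twoDimHorizontalSurgery_general (ω : Measure (Pt 2)) [IsLocallyFiniteMeasure ω]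
    (J : Cube 2) {E : Set (Pt 2)} (hE : MeasurableSet E) {lam : ℝ} (hlam : 0 < lam)
    (hlam' : lam < 1 / 2) (Lam : ℕ) :
    (∑ k ∈ Finset.Icc (-(Lam : ℤ)) (Lam : ℤ),
          ∫⁻ x in leftFace (J.trans (horizTrans k (lam * J.l))) lam,
            ENNReal.ofReal
              ((haarDiff ω (J.trans (horizTrans k (lam * J.l))) (indic E) x) ^ 2) ∂ω) /
        ((Finset.Icc (-(Lam : ℤ)) (Lam : ℤ)).card : ℝ≥0∞)
      ≤ ENNReal.ofReal (32 * lam + 8 / (2 * Lam + 1)) * ω E := by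
  refine ENNReal.div_le_of_le_mul
    ((sum_setLIntegral_haarDiff_leftFace_le ω J hE hlam hlam' _ _).trans_eq ?_)
  rw [card_Icc_neg_natCast, mul_right_comm _ (ω E), ← ENNReal.ofReal_natCast,
    ← ENNReal.ofReal_mul (by positivity)]
  congr 2
  push_cast
  field_simp
  ring

end HorizontalSurgery

/-- **Two-dimensional horizontal surgery estimate.** For squares `J ⊂ 3R` in the plane with
`ρ`-comparable side lengths and `λ ∈ (0,1/2)`, averaging over the set `ℋ_λ` of horizontal
translations of step `λℓ(J)` with `|γ| ≤ Cℓ(R)`,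
`(1/#ℋ_λ) Σ_{γ ∈ ℋ_λ} ∫_{(J+γ)_λ^{left}} |Δ_{J+γ}^ω 1_R|² dω ≤ C_ρ √λ ω(R)`,
where `(J+γ)_λ^{left}` is the vertical face of width `λℓ(J)` of the lower-left corner,
and `C_ρ` depends only on `ρ`. -/
theorem twoDimHorizontalSurgery (ρ : ℕ) :
    ∃ C : ℝ, 0 < C ∧
      ∀ ω : Measure (Pt 2), IsLocallyFiniteMeasure ω →
      ∀ J R : Cube 2, (2:ℝ) ^ (-(ρ:ℤ)) * J.l ≤ R.l → R.l ≤ (2:ℝ) ^ (ρ:ℤ) * J.l →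
      J.set ⊆ R.tri.set →
      ∀ lam : ℝ, 0 < lam → lam < 1/2 →
      ∀ Lam : ℕ, 0 < Lam → R.l ≤ (Lam : ℝ) * (lam * J.l) →
      (Lam : ℝ) * (lam * J.l) ≤ (2:ℝ) ^ (ρ:ℤ) * R.l →
      (∑ k ∈ Finset.Icc (-(Lam : ℤ)) (Lam : ℤ),
            ∫⁻ x in leftFace (J.trans (horizTrans k (lam * J.l))) lam,
              ENNReal.ofReal
                ((haarDiff ω (J.trans (horizTrans k (lam * J.l))) (indic R.set) x) ^ 2) ∂ω) /
          ((Finset.Icc (-(Lam : ℤ)) (Lam : ℤ)).card : ℝ≥0∞)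
        ≤ ENNReal.ofReal (C * Real.sqrt lam) * ω R.set := by
  refine ⟨32 + 8 * 2 ^ (ρ : ℤ), by positivity, ?_⟩
  intro ω _ J R hJR _ _ lam hlam hlam' Lam _ hRL _
  have hLam : 1 ≤ (2 : ℝ) ^ (ρ : ℤ) * (Lam * lam) :=
    one_le_zpow_mul_of_comparable two_pos J.lpos hJR (hRL.trans_eq (mul_assoc _ _ _).symm)
  refine (twoDimHorizontalSurgery_general ω J R.measurableSet_set hlam hlam' Lam).trans ?_
  gcongr
  exact mul_add_div_le_mul_sqrt hlam (by linarith) hLam
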